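/- Let (V, m, B) be a finite Dirichlet multigraph with V° := V \ B nonempty. Assume 1 ≤ deg(v) ≤ d for every v ∈ V°, where d ≥ 1 is a natural number. Let h ≥ 0 be a real number such that h * |A| ≤ cut(A) for every nonempty subset A ⊆ V°, where |A| denotes the cardinality of A. Then for every function f : V → ℝ with f(v) = 0 for all v ∈ B, one has (h^2 / (2 * d^2)) * Σ_{v ∈ V°} (f v)^2 ≤ E(f). -/

import Mathlib

/-!
The argument is the classical one for Cheeger inequalities. With `g = f ^ 2`, using the isoperimetric
hypothesis on the superlevel sets of `g` gives the co-area inequality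
`h * ∑ g ≤ ∑ u, ∑ v, m u v * (g u - g v)⁺` (`coarea_le`), and by symmetry the right side is
`Q / 2` with `Q = ∑ u, ∑ v, m u v * |g u - g v|` (`sum_posPart_eq_half_abs`). Factoring
`|g u - g v| = |f u - f v| * |f u + f v|`, Cauchy–Schwarz bounds `Q ^ 2` by twice the energy times
`∑ u, ∑ v, m u v * (f u + f v) ^ 2 ≤ 4 * d * ∑ f ^ 2`. This yields
`h ^ 2 / (2 * d) * ∑ f ^ 2 ≤ E(f)`, which is at least as strong as the claim because `1 ≤ d`.
-/

open Finset

/-- Co-area inequality. The integral over superlevel sets is replaced by induction on the size of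
the support `A` of `g`: subtracting the minimum `t` of `g` on `A` from `g` on `A` shrinks the
support, and changes the two sides by `t * h * |A|` and `t * cut(A)` respectively. -/
theorem coarea_le {V : Type*} [Fintype V] [DecidableEq V]
    (m : V → V → ℕ) (B : Finset V) (h : ℝ)
    (hcheeger : ∀ A : Finset V, A ⊆ Finset.univ \ B → A.Nonempty →
      h * (A.card : ℝ) ≤ ∑ u ∈ A, ∑ v ∈ Aᶜ, (m u v : ℝ))
    (g : V → ℝ) (hg : ∀ v, 0 ≤ g v) (hB : ∀ v ∈ B, g v = 0) :
    h * ∑ v, g v ≤ ∑ u, ∑ v, (m u v : ℝ) * max (g u - g v) 0 := by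
  induction hn : (univ.filter fun v => g v ≠ 0).card using Nat.strong_induction_on
    generalizing g with
  | _ n ih =>
  set A := univ.filter fun v => g v ≠ 0 with hA
  have memA : ∀ v, v ∈ A ↔ g v ≠ 0 := by simp [hA]
  rcases A.eq_empty_or_nonempty with h0 | hne
  · have hz : ∀ v, g v = 0 := fun v => by
      by_contra hv
      have := (memA v).2 hv
      simp [h0] at this
    simp [hz]
  obtain ⟨a, haA, hmin⟩ := A.exists_min_image g hne
  have htpos : 0 ≤ g a := hg a
  set g' : V → ℝ := fun v => g v - if v ∈ A then g a else 0 with hg'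
  have hin : ∀ v ∈ A, g' v = g v - g a := fun v hv => by simp [hg', hv]
  have hout : ∀ v, v ∉ A → g' v = 0 ∧ g v = 0 := fun v hv => by
    have : g v = 0 := by simpa [memA] using hv
    simp [hg', hv, this]
  have hg'nn : ∀ v, 0 ≤ g' v := fun v => by
    by_cases hv : v ∈ A
    · rw [hin v hv]; linarith [hmin v hv]
    · rw [(hout v hv).1]
  have hsub : A ⊆ univ \ B := fun v hv => by
    simp only [mem_sdiff, mem_univ, true_and]
    exact fun hvB => (memA v).1 hv (hB v hvB)
  have hlt : (univ.filter fun v => g' v ≠ 0).card < n := by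
    rw [← hn]
    apply card_lt_card
    refine (ssubset_iff_of_subset fun v hv => ?_).2 ⟨a, haA, ?_⟩
    · by_contra hvA
      exact (mem_filter.1 hv).2 (hout v hvA).1
    · simp [hin a haA]
  have key := ih _ hlt g' hg'nn
    (fun v hv => (hout v fun hvA => (memA v).1 hvA (hB v hv)).1) rfl
  have hcut := mul_le_mul_of_nonneg_left (hcheeger A hsub hne) htpos
  have hsum : ∑ v, g v = ∑ v, g' v + g a * A.card := by
    simp [hg', sum_sub_distrib, mul_comm]
  have hterm : ∀ u v, (m u v : ℝ) * max (g u - g v) 0 = (m u v : ℝ) * max (g' u - g' v) 0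
      + g a * (if u ∈ A then if v ∈ Aᶜ then (m u v : ℝ) else 0 else 0) := fun u v => by
    by_cases hu : u ∈ A <;> by_cases hv : v ∈ A
    · simp [hu, hv, hin]
    · have h1 := hg'nn u
      simp only [hu, hv, mem_compl, not_false_eq_true, if_true, (hout v hv).1, (hout v hv).2,
        sub_zero, max_eq_left (hg u), max_eq_left h1]
      rw [hin u hu]; ring
    · simp [hu, (hout u hu).1, (hout u hu).2, hg v, hg'nn v]
    · simp [hu, (hout u hu).1, (hout u hu).2, (hout v hv).1, (hout v hv).2]
  have hrhs : ∑ u, ∑ v, (m u v : ℝ) * max (g u - g v) 0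
      = ∑ u, ∑ v, (m u v : ℝ) * max (g' u - g' v) 0
        + g a * ∑ u ∈ A, ∑ v ∈ Aᶜ, (m u v : ℝ) := by
    have : ∑ u ∈ A, ∑ v ∈ Aᶜ, (m u v : ℝ)
        = ∑ u, ∑ v, (if u ∈ A then if v ∈ Aᶜ then (m u v : ℝ) else 0 else 0) := by
      rw [← univ_inter A, ← sum_ite_mem univ A, univ_inter]
      refine sum_congr rfl fun u _ => ?_
      by_cases hu : u ∈ A
      · simp only [hu, if_true, sum_ite_mem, univ_inter]
      · simp [hu]
    rw [this]
    simp only [hterm, sum_add_distrib, mul_sum]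
  rw [hrhs, hsum]
  linarith

theorem sum_posPart_eq_half_abs {V : Type*} [Fintype V]
    (m : V → V → ℕ) (hsymm : ∀ u v, m u v = m v u) (g : V → ℝ) :
    ∑ u, ∑ v, (m u v : ℝ) * max (g u - g v) 0
      = (1 / 2) * ∑ u, ∑ v, (m u v : ℝ) * |g u - g v| := by
  have hswap : ∑ u, ∑ v, (m u v : ℝ) * max (g u - g v) 0
      = ∑ u, ∑ v, (m u v : ℝ) * max (g v - g u) 0 := by
    rw [sum_comm]
    exact sum_congr rfl fun u _ => sum_congr rfl fun v _ => by rw [hsymm]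
  have habs : ∑ u, ∑ v, (m u v : ℝ) * |g u - g v|
      = ∑ u, ∑ v, (m u v : ℝ) * max (g u - g v) 0
        + ∑ u, ∑ v, (m u v : ℝ) * max (g v - g u) 0 := by
    simp only [← sum_add_distrib]
    refine sum_congr rfl fun u _ => sum_congr rfl fun v _ => ?_
    rcases le_total (g u) (g v) with huv | huv
    · rw [abs_of_nonpos (by linarith), max_eq_right (by linarith), max_eq_left (by linarith)]
      ring
    · rw [abs_of_nonneg (by linarith), max_eq_left (by linarith), max_eq_right (by linarith)]
      ring
  linarith

/-- **Unweighted Dirichlet Cheeger inequality.**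
Let `(V, m, B)` be a finite Dirichlet multigraph with nonempty boundary `B` and
nonempty interior `V° = V \ B`, and suppose every interior vertex has degree
`deg(v) = (∑ u, m v u) + m v v` between `1` and `d`.  If `h ≥ 0` satisfies
`h · |A| ≤ cut(A)` for every nonempty `A ⊆ V°`, then every `f : V → ℝ`
vanishing on `B` satisfies `(h²/(2d²)) · ∑_{v ∈ V°} f(v)² ≤ E(f)`. -/
theorem unweighted_dirichlet_cheeger
    {V : Type*} [Fintype V] [DecidableEq V]
    (m : V → V → ℕ) (hsymm : ∀ u v, m u v = m v u)
    (B : Finset V) (hBne : B.Nonempty) (hint : (Finset.univ \ B).Nonempty)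
    (d : ℕ) (hd : 1 ≤ d)
    (hdeg : ∀ v ∈ Finset.univ \ B,
      1 ≤ (∑ u, m v u) + m v v ∧ (∑ u, m v u) + m v v ≤ d)
    (h : ℝ) (hh : 0 ≤ h)
    (hcheeger : ∀ A : Finset V, A ⊆ Finset.univ \ B → A.Nonempty →
      h * (A.card : ℝ) ≤ ∑ u ∈ A, ∑ v ∈ Aᶜ, (m u v : ℝ))
    (f : V → ℝ) (hf : ∀ v ∈ B, f v = 0) :
    (h ^ 2 / (2 * (d : ℝ) ^ 2)) * ∑ v ∈ Finset.univ \ B, (f v) ^ 2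
      ≤ (1 / 2) * ∑ u, ∑ v, (m u v : ℝ) * (f u - f v) ^ 2 := by
  set S := ∑ v, (f v) ^ 2 with hS
  set T := ∑ u, ∑ v, (m u v : ℝ) * (f u - f v) ^ 2 with hT
  set P := ∑ u, ∑ v, (m u v : ℝ) * (f u + f v) ^ 2 with hP
  set Q := ∑ u, ∑ v, (m u v : ℝ) * |(f u) ^ 2 - (f v) ^ 2| with hQ
  have hSint : ∑ v ∈ univ \ B, (f v) ^ 2 = S :=
    sum_subset (subset_univ _) fun v _ hv => by
      rw [hf v (by simpa using hv)]; ring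
  have hS0 : 0 ≤ S := sum_nonneg fun v _ => sq_nonneg _
  have hT0 : 0 ≤ T := sum_nonneg fun u _ => sum_nonneg fun v _ => by positivity
  have hd' : (1 : ℝ) ≤ d := by exact_mod_cast hd
  have hco : h * S ≤ (1 / 2) * Q := by
    rw [hQ, ← sum_posPart_eq_half_abs m hsymm fun v => (f v) ^ 2]
    exact coarea_le m B h hcheeger _ (fun v => sq_nonneg _) fun v hv => by simp [hf v hv]
  have hCS : Q ^ 2 ≤ T * P := by
    simp only [hQ, hT, hP, ← Fintype.sum_prod_type']
    refine sum_sq_le_sum_mul_sum_of_sq_le_mul _ (fun x _ => by positivity)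
      (fun x _ => by positivity) fun x _ => ?_
    rw [mul_pow, sq_abs]; exact le_of_eq (by ring)
  have hrow : ∑ u, ∑ v, (m u v : ℝ) * (f u) ^ 2 ≤ d * S := by
    rw [hS, mul_sum]
    refine sum_le_sum fun u _ => ?_
    rw [← sum_mul]
    by_cases hu : u ∈ B
    · simp [hf u hu]
    · have h1 : ∑ v, m u v ≤ d := by have := (hdeg u (by simpa using hu)).2; omega
      have h2 : ∑ v, (m u v : ℝ) ≤ d := by exact_mod_cast h1
      exact mul_le_mul_of_nonneg_right h2 (sq_nonneg _)
  have hcol : ∑ u, ∑ v, (m u v : ℝ) * (f v) ^ 2 = ∑ u, ∑ v, (m u v : ℝ) * (f u) ^ 2 := by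
    rw [sum_comm]
    exact sum_congr rfl fun u _ => sum_congr rfl fun v _ => by rw [hsymm]
  have hP4 : P ≤ 4 * (d * S) := by
    have : P ≤ 2 * (∑ u, ∑ v, (m u v : ℝ) * (f u) ^ 2 + ∑ u, ∑ v, (m u v : ℝ) * (f v) ^ 2) := by
      simp only [hP, ← sum_add_distrib, mul_sum]
      refine sum_le_sum fun u _ => sum_le_sum fun v _ => ?_
      have hm : (0 : ℝ) ≤ m u v := Nat.cast_nonneg _
      nlinarith [mul_nonneg hm (sq_nonneg (f u - f v))]
    linarith
  rw [hSint]
  rcases hS0.eq_or_lt with hz | hpos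
  · rw [← hz]; linarith
  have h1 : (h * S) ^ 2 ≤ ((1 / 2) * Q) ^ 2 := pow_le_pow_left₀ (by positivity) hco 2
  have h2 : T * P ≤ T * (4 * (d * S)) := mul_le_mul_of_nonneg_left hP4 hT0
  have h3 : h ^ 2 * S ≤ d * T := by
    refine le_of_mul_le_mul_right ?_ hpos
    nlinarith
  have h4 : d * T ≤ (d : ℝ) ^ 2 * T := mul_le_mul_of_nonneg_right (by nlinarith) hT0
  rw [div_mul_eq_mul_div, div_le_iff₀ (by positivity)]
  linarith
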